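/- arXiv:2403.17821 — 3 statements merged into one kernel-verified Lean document; each statement's English description precedes it below -/
import Mathlib

section
/- Mountain Pass Theorem under the weak Cerami–Palais–Smale condition (Proposition 2.2): Let X and S be real Banach spaces, ι : X → S a continuous linear embedding, and J : X → ℝ a C¹ functional. Suppose there exist ρ > 0, α ∈ ℝ, and u₀, e ∈ X such that: (i) for every u ∈ X with ‖ι(u) − ι(u₀)‖_S = ρ one has J(u) ≥ α > J(u₀); (ii) ‖ι(e) − ι(u₀)‖_S > ρ and J(e) < J(u₀). Set c = inf over φ ∈ C([0,1], X) with φ(0) = u₀ and φ(1) = e of max_{s ∈ [0,1]} J(φ(s)). If J satisfies the weak Cerami–Palais–Smale condition at level c, then J has a critical point u*, different from u₀, such that J(u*) = c ≥ α > J(u₀). -/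
open Filter Topology Set

theorem mp_ekeland {Y : Type*} [MetricSpace Y] [CompleteSpace Y] (Ψ : Y → ℝ)
    (hΨ : LowerSemicontinuous Ψ) (m : ℝ) (hm : ∀ y, m ≤ Ψ y) (η : ℝ) (hη : 0 < η) (y₀ : Y) :
    ∃ y, Ψ y ≤ Ψ y₀ ∧ ∀ z, Ψ z + η * dist y z ≤ Ψ y → Ψ y ≤ Ψ z := by
  have key : ∀ (y : Y) (n : ℕ), ∃ z, Ψ z + η * dist y z ≤ Ψ y ∧
      ∀ w, Ψ w + η * dist y w ≤ Ψ y → Ψ z ≤ Ψ w + (1 / 2 : ℝ) ^ n := by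
    intro y n
    have hne : (Ψ '' {z | Ψ z + η * dist y z ≤ Ψ y}).Nonempty :=
      ⟨Ψ y, y, by simp, rfl⟩
    have hb : BddBelow (Ψ '' {z | Ψ z + η * dist y z ≤ Ψ y}) :=
      ⟨m, by rintro _ ⟨z, -, rfl⟩; exact hm z⟩
    obtain ⟨_, ⟨z, hz, rfl⟩, hlt⟩ := exists_lt_of_csInf_lt hne
      (lt_add_of_pos_right _ (by positivity : (0 : ℝ) < (1 / 2 : ℝ) ^ n))
    refine ⟨z, hz, fun w hw => ?_⟩
    have := csInf_le hb ⟨w, hw, rfl⟩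
    linarith
  choose next h1 h2 using key
  let u : ℕ → Y := fun n => Nat.rec y₀ (fun k y => next y k) n
  have hu : ∀ n, u (n + 1) = next (u n) n := fun n => rfl
  have trans' : ∀ a b d : Y, Ψ b + η * dist a b ≤ Ψ a → Ψ d + η * dist b d ≤ Ψ b →
      Ψ d + η * dist a d ≤ Ψ a := by
    intro a b d hab hbd
    have := mul_le_mul_of_nonneg_left (dist_triangle a b d) hη.le
    linarith
  have hmono : ∀ n k, Ψ (u (n + k)) + η * dist (u n) (u (n + k)) ≤ Ψ (u n) := by
    intro n k
    induction k with
    | zero => simp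
    | succ k ih =>
      refine trans' _ _ _ ih ?_
      rw [← add_assoc, hu]
      exact h1 _ _
  have hanti : Antitone (fun n => Ψ (u n)) := by
    refine antitone_nat_of_succ_le fun n => ?_
    have := hmono n 1
    have h3 : 0 ≤ η * dist (u n) (u (n + 1)) := by positivity
    linarith
  have hconv := tendsto_atTop_ciInf hanti ⟨m, by rintro _ ⟨n, rfl⟩; exact hm _⟩
  have hcau : CauchySeq u := by
    have hc := hconv.cauchySeq
    rw [Metric.cauchySeq_iff'] at hc ⊢
    intro ε hε
    obtain ⟨N, hN⟩ := hc (η * ε) (by positivity)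
    refine ⟨N, fun n hn => ?_⟩
    have h3 := hN n hn
    obtain ⟨k, rfl⟩ := Nat.exists_eq_add_of_le hn
    have h4 := hmono N k
    rw [Real.dist_eq, abs_lt] at h3
    rw [dist_comm]
    have : η * dist (u N) (u (N + k)) < η * ε := by linarith [h3.1]
    exact lt_of_mul_lt_mul_left this hη.le
  obtain ⟨y, hy⟩ := cauchySeq_tendsto_of_complete hcau
  have hyS : ∀ n, Ψ y + η * dist (u n) y ≤ Ψ (u n) := by
    intro n
    have hl : LowerSemicontinuous (fun z => Ψ z + η * dist (u n) z) :=
      hΨ.add (by fun_prop : Continuous (fun z => η * dist (u n) z)).lowerSemicontinuous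
    have hcl := hl.isClosed_preimage (Ψ (u n))
    have : y ∈ (fun z => Ψ z + η * dist (u n) z) ⁻¹' Iic (Ψ (u n)) := by
      refine hcl.mem_of_tendsto hy ?_
      filter_upwards [eventually_ge_atTop n] with k hk
      obtain ⟨j, rfl⟩ := Nat.exists_eq_add_of_le hk
      exact hmono n j
    exact this
  refine ⟨y, ?_, fun z hz => ?_⟩
  · have := hyS 0
    have h3 : 0 ≤ η * dist (u 0) y := by positivity
    have h4 : u 0 = y₀ := rfl
    rw [h4] at this h3
    linarith
  · have hle : ∀ n : ℕ, Ψ y ≤ Ψ z + (1 / 2 : ℝ) ^ n := by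
      intro n
      have h3 := h2 (u n) n z (trans' _ _ _ (hyS n) hz)
      rw [← hu] at h3
      have h4 := hyS (n + 1)
      have h5 : 0 ≤ η * dist (u (n + 1)) y := by positivity
      linarith
    have ht : Tendsto (fun n : ℕ => Ψ z + (1 / 2 : ℝ) ^ n) atTop (𝓝 (Ψ z + 0)) :=
      (tendsto_pow_atTop_nhds_zero_of_lt_one (by norm_num) (by norm_num)).const_add _
    rw [add_zero] at ht
    exact ge_of_tendsto' ht hle

section
variable {X : Type*} [NormedAddCommGroup X] [NormedSpace ℝ X]

noncomputable def mpF (x : X) : ℝ × X := (Real.log (1 + ‖x‖), (1 + ‖x‖)⁻¹ • x)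

noncomputable def mpB (p : ℝ × X) : X := Real.exp p.1 • p.2

theorem mpB_cont : Continuous (mpB : ℝ × X → X) := by
  unfold mpB; fun_prop

theorem mpF_cont : Continuous (mpF : X → ℝ × X) := by
  have h : ∀ x : X, 1 + ‖x‖ ≠ 0 := fun x => by positivity
  unfold mpF
  refine Continuous.prodMk (Continuous.log (by fun_prop) h) ?_
  exact (Continuous.inv₀ (by fun_prop) h).smul continuous_id

theorem mpB_mpF (x : X) : mpB (mpF x) = x := by
  have h : 0 < 1 + ‖x‖ := by positivity
  simp only [mpB, mpF]
  rw [Real.exp_log h, smul_smul, mul_inv_cancel₀ h.ne', one_smul]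

theorem mpF_mem (x : X) : ‖(mpF x).2‖ = 1 - Real.exp (-(mpF x).1) := by
  have h : 0 < 1 + ‖x‖ := by positivity
  simp only [mpF]
  rw [Real.exp_neg, Real.exp_log h, norm_smul, norm_inv, Real.norm_of_nonneg h.le]
  field_simp
  ring

theorem mpF_mpB (p : ℝ × X) (hp : ‖p.2‖ = 1 - Real.exp (-p.1)) : mpF (mpB p) = p := by
  have hn : 1 + ‖mpB p‖ = Real.exp p.1 := by
    simp only [mpB]
    rw [norm_smul, hp, Real.norm_of_nonneg (Real.exp_pos _).le, mul_sub, ← Real.exp_add]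
    simp
  unfold mpF
  rw [hn]
  ext
  · simp
  · simp only [mpB]
    rw [smul_smul, inv_mul_cancel₀ (Real.exp_pos _).ne', one_smul]

theorem mpF_dist (x y : X) (h : ℝ) (h0 : 0 ≤ h) (h2 : h ≤ 1 / 2)
    (hxy : ‖y - x‖ ≤ h * (1 + ‖x‖)) : dist (mpF x) (mpF y) ≤ 2 * h := by
  have hx : 0 < 1 + ‖x‖ := by positivity
  have hy : 0 < 1 + ‖y‖ := by positivity
  have hab : |‖y‖ - ‖x‖| ≤ h * (1 + ‖x‖) := (abs_norm_sub_norm_le y x).trans hxy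
  have hab' := abs_le.1 hab
  rw [Prod.dist_eq]
  refine max_le ?_ ?_
  · simp only [mpF]
    rw [Real.dist_eq, ← Real.log_div hx.ne' hy.ne', abs_le]
    constructor
    · have h3 := Real.log_le_sub_one_of_pos (div_pos hy hx)
      rw [← inv_div, Real.log_inv] 
      have : (1 + ‖y‖) / (1 + ‖x‖) ≤ 1 + h := by
        rw [div_le_iff₀ hx]; nlinarith
      linarith
    · have h3 := Real.log_le_sub_one_of_pos (div_pos hx hy)
      have : (1 + ‖x‖) / (1 + ‖y‖) ≤ 1 + 2 * h := by
        rw [div_le_iff₀ hy]; nlinarith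
      linarith
  · simp only [mpF]
    rw [dist_eq_norm]
    have e1 : (1 + ‖x‖)⁻¹ • x - (1 + ‖y‖)⁻¹ • y
        = (1 + ‖x‖)⁻¹ • (x - y) + ((1 + ‖x‖)⁻¹ - (1 + ‖y‖)⁻¹) • y := by
      rw [smul_sub, sub_smul]; abel
    rw [e1]
    have e2 : (1 + ‖x‖)⁻¹ - (1 + ‖y‖)⁻¹ = (‖y‖ - ‖x‖) / ((1 + ‖x‖) * (1 + ‖y‖)) := by
      field_simp
      ring
    have b1 : ‖(1 + ‖x‖)⁻¹ • (x - y)‖ ≤ h := by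
      rw [norm_smul, norm_inv, Real.norm_of_nonneg hx.le, norm_sub_rev, inv_mul_le_iff₀ hx]
      linarith
    have b2 : ‖((1 + ‖x‖)⁻¹ - (1 + ‖y‖)⁻¹) • y‖ ≤ h := by
      rw [norm_smul, e2, norm_div, Real.norm_eq_abs, Real.norm_of_nonneg (by positivity),
        div_mul_eq_mul_div, div_le_iff₀ (by positivity)]
      have : 0 ≤ h * (1 + ‖x‖) := by positivity
      nlinarith [norm_nonneg y]
    linarith [norm_add_le ((1 + ‖x‖)⁻¹ • (x - y)) (((1 + ‖x‖)⁻¹ - (1 + ‖y‖)⁻¹) • y)]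

theorem mp_local (J : X → ℝ) (hJ : ContDiff ℝ 1 J) (φ v : C(unitInterval, X)) (M ε : ℝ)
    (hM : ∀ s, J (φ s) ≤ M) (hv : ∀ s, J (φ s) = M → fderiv ℝ J (φ s) (v s) < -ε) :
    ∀ᶠ h in 𝓝 (0 : ℝ), 0 < h → ∀ s, J (φ s + h • v s) ≤ M - h * ε := by
  have hd : Differentiable ℝ J := hJ.differentiable one_ne_zero
  have hJc : Continuous J := hJ.continuous
  have hfc : Continuous (fderiv ℝ J) := hJ.continuous_fderiv one_ne_zero
  have hc1 : Continuous (fun p : ℝ × unitInterval => φ p.2 + p.1 • v p.2) := by fun_prop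
  have hc2 : Continuous (fun p : ℝ × unitInterval =>
      fderiv ℝ J (φ p.2 + p.1 • v p.2) (v p.2)) :=
    (hfc.comp hc1).clm_apply (by fun_prop)
  have hc3 : Continuous (fun p : ℝ × unitInterval => J (φ p.2 + p.1 • v p.2)) := hJc.comp hc1
  have main : ∀ᶠ h in 𝓝 (0 : ℝ), ∀ s ∈ (univ : Set unitInterval),
      0 < h → J (φ s + h • v s) ≤ M - h * ε := by
    refine isCompact_univ.eventually_forall_of_forall_eventually fun s _ => ?_
    by_cases hs : J (φ s) = M
    · have h1 : ∀ᶠ p : ℝ × unitInterval in 𝓝 ((0 : ℝ), s),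
          fderiv ℝ J (φ p.2 + p.1 • v p.2) (v p.2) < -ε := by
        refine hc2.continuousAt.eventually_lt continuousAt_const ?_
        simpa using hv s hs
      rw [nhds_prod_eq] at h1 ⊢
      obtain ⟨pa, hpa, pb, hpb, hab⟩ := eventually_prod_iff.1 h1
      obtain ⟨r, hr, hball⟩ := Metric.eventually_nhds_iff.1 hpa
      refine eventually_prod_iff.2 ⟨fun h => dist h 0 < r, Metric.ball_mem_nhds _ hr, pb, hpb, ?_⟩
      intro h hh t ht hpos
      rw [Real.dist_eq, sub_zero, abs_of_pos hpos] at hh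
      have hder : ∀ x : ℝ, HasDerivAt (fun x : ℝ => J (φ t + x • v t))
          (fderiv ℝ J (φ t + x • v t) (v t)) x := by
        intro x
        have hl : HasDerivAt (fun x : ℝ => φ t + x • v t) (v t) x := by
          simpa using ((hasDerivAt_id x).smul_const (v t)).const_add (φ t)
        exact (hd _).hasFDerivAt.comp_hasDerivAt x hl
      obtain ⟨x, hx, hxe⟩ := exists_hasDerivAt_eq_slope _ _ hpos
        (fun x _ => (hder x).continuousAt.continuousWithinAt) (fun x _ => hder x)
      have hlt := hab (hball (by
        rw [Real.dist_eq, sub_zero, abs_of_pos hx.1]; linarith [hx.2] : dist x 0 < r)) ht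
      simp only at hlt
      rw [hxe, div_lt_iff₀ (by linarith)] at hlt
      simp only [zero_smul, add_zero] at hlt
      have := hM t
      linarith
    · have hlt : J (φ s) < M := lt_of_le_of_ne (hM s) hs
      have h1 : ∀ᶠ p : ℝ × unitInterval in 𝓝 ((0 : ℝ), s),
          J (φ p.2 + p.1 • v p.2) < M - p.1 * ε := by
        refine hc3.continuousAt.eventually_lt
          (by fun_prop : Continuous (fun p : ℝ × unitInterval => M - p.1 * ε)).continuousAt ?_
        simpa using hlt
      filter_upwards [h1] with p hp _
      exact hp.le
  filter_upwards [main] with h hh hpos s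
  exact hh s trivial hpos

theorem mp_field (J : X → ℝ) (hJ : ContDiff ℝ 1 J) (φ : C(unitInterval, X)) (M ε : ℝ) (hε : 0 < ε)
    (h0 : J (φ 0) < M) (h1 : J (φ 1) < M)
    (hK : ∀ s, J (φ s) = M → ε ≤ ‖fderiv ℝ J (φ s)‖ * (1 + ‖φ s‖)) :
    ∃ v : C(unitInterval, X), v 0 = 0 ∧ v 1 = 0 ∧ (∀ s, ‖v s‖ ≤ 1 + ‖φ s‖) ∧
      ∀ s, J (φ s) = M → fderiv ℝ J (φ s) (v s) < -(ε / 2) := by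
  have hJc : Continuous J := hJ.continuous
  have hfc : Continuous (fderiv ℝ J) := hJ.continuous_fderiv one_ne_zero
  let T : unitInterval → Set X := fun s => {w | ‖w‖ ≤ 1 + ‖φ s‖ ∧
    (J (φ s) = M → fderiv ℝ J (φ s) w < -(ε / 2)) ∧ (s = 0 ∨ s = 1 → w = 0)}
  have hconv : ∀ s, Convex ℝ (T s) := by
    intro s x hx y hy a b ha hb hab
    refine ⟨?_, fun hs => ?_, fun hs => ?_⟩
    · have := norm_add_le (a • x) (b • y)
      rw [norm_smul, norm_smul, Real.norm_of_nonneg ha, Real.norm_of_nonneg hb] at this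
      have h3 := mul_le_mul_of_nonneg_left hx.1 ha
      have h4 := mul_le_mul_of_nonneg_left hy.1 hb
      have h5 : a * (1 + ‖φ s‖) + b * (1 + ‖φ s‖) = 1 + ‖φ s‖ := by rw [← add_mul, hab, one_mul]
      linarith
    · have := (convex_Iio (-(ε / 2))) (hx.2.1 hs) (hy.2.1 hs) ha hb hab
      simpa using this
    · rw [hx.2.2 hs, hy.2.2 hs]; simp
  have hloc : ∀ s, ∃ w, ∀ᶠ t in 𝓝 s, w ∈ T t := by
    intro s
    by_cases hs : J (φ s) = M
    · have hpos : 0 < 1 + ‖φ s‖ := by positivity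
      have hlt : ε / 2 / (1 + ‖φ s‖) < ‖fderiv ℝ J (φ s)‖ := by
        rw [div_lt_iff₀ hpos]; linarith [hK s hs]
      obtain ⟨x, hx1, hx2⟩ := (fderiv ℝ J (φ s)).exists_lt_apply_of_lt_opNorm hlt
      rw [div_lt_iff₀ hpos] at hx2
      have : ∃ w, ‖w‖ < 1 + ‖φ s‖ ∧ fderiv ℝ J (φ s) w < -(ε / 2) := by
        have hn : ‖(1 + ‖φ s‖) • x‖ < 1 + ‖φ s‖ := by
          rw [norm_smul, Real.norm_of_nonneg hpos.le]
          nlinarith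
        rcases le_total 0 (fderiv ℝ J (φ s) x) with hp | hp
        · refine ⟨-((1 + ‖φ s‖) • x), by rwa [norm_neg], ?_⟩
          rw [Real.norm_of_nonneg hp] at hx2
          rw [map_neg, map_smul, smul_eq_mul]
          linarith
        · refine ⟨(1 + ‖φ s‖) • x, hn, ?_⟩
          rw [Real.norm_of_nonpos hp] at hx2
          rw [map_smul, smul_eq_mul]
          linarith
      obtain ⟨w, hw1, hw2⟩ := this
      refine ⟨w, ?_⟩
      have e1 : ∀ᶠ t in 𝓝 s, ‖w‖ < 1 + ‖φ t‖ :=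
        continuousAt_const.eventually_lt (by fun_prop) hw1
      have e2 : ∀ᶠ t in 𝓝 s, fderiv ℝ J (φ t) w < -(ε / 2) :=
        ((hfc.comp φ.continuous).clm_apply continuous_const).continuousAt.eventually_lt
          continuousAt_const hw2
      have e3 : ∀ᶠ t in 𝓝 s, t ≠ 0 := isOpen_ne.mem_nhds (by rintro rfl; exact h0.ne hs)
      have e4 : ∀ᶠ t in 𝓝 s, t ≠ 1 := isOpen_ne.mem_nhds (by rintro rfl; exact h1.ne hs)
      filter_upwards [e1, e2, e3, e4] with t a b c d
      exact ⟨a.le, fun _ => b, fun h => (h.elim c d).elim⟩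
    · refine ⟨0, ?_⟩
      have e1 : ∀ᶠ t in 𝓝 s, J (φ t) ≠ M :=
        (hJc.comp φ.continuous).continuousAt.eventually_ne hs
      filter_upwards [e1] with t ht
      exact ⟨by simp only [norm_zero]; positivity, fun h => (ht h).elim, fun _ => rfl⟩
  obtain ⟨g, hg⟩ := exists_continuous_forall_mem_convex_of_local_const hconv hloc
  exact ⟨g, (hg 0).2.2 (Or.inl rfl), (hg 1).2.2 (Or.inr rfl), fun s => (hg s).1,
    fun s => (hg s).2.1⟩

theorem mp_bdd (J : X → ℝ) (hJ : Continuous J) (φ : C(unitInterval, X)) :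
    BddAbove (range fun s => J (φ s)) := 
  (isCompact_range (hJ.comp φ.continuous)).bddAbove

theorem mp_cerami [CompleteSpace X] (J : X → ℝ) (hJ : ContDiff ℝ 1 J) (u₀ e : X) (c : ℝ)
    (h0 : J u₀ < c) (h1 : J e < c)
    (hlow : ∀ φ : C(unitInterval, X), φ 0 = u₀ → φ 1 = e → c ≤ ⨆ s, J (φ s))
    (ε : ℝ) (hε : 0 < ε)
    (hup : ∃ φ : C(unitInterval, X), φ 0 = u₀ ∧ φ 1 = e ∧ ⨆ s, J (φ s) < c + ε) :
    ∃ u, c ≤ J u ∧ J u < c + ε ∧ ‖fderiv ℝ J u‖ * (1 + ‖u‖) < ε := by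
  have hJc : Continuous J := hJ.continuous
  let A : Set C(unitInterval, ℝ × X) := {g | mpB (g 0) = u₀ ∧ mpB (g 1) = e ∧
    ∀ t, ‖(g t).2‖ = 1 - Real.exp (-(g t).1)}
  have hA : IsClosed A := by
    have hev : ∀ t, Continuous (fun g : C(unitInterval, ℝ × X) => g t) :=
      fun t => continuous_eval_const t
    suffices hall : IsClosed {g : C(unitInterval, ℝ × X) |
        ∀ t, ‖(g t).2‖ = 1 - Real.exp (-(g t).1)} from
      (isClosed_eq (mpB_cont.comp (hev 0)) continuous_const).inter
        ((isClosed_eq (mpB_cont.comp (hev 1)) continuous_const).inter hall)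
    rw [Set.ofPred_forall]
    refine isClosed_iInter fun t => isClosed_eq ?_ ?_
    · exact (hev t).snd.norm
    · exact continuous_const.sub (Real.continuous_exp.comp (hev t).fst.neg)
  have : CompleteSpace A := hA.completeSpace_coe
  let P : C(unitInterval, ℝ × X) → C(unitInterval, X) :=
    fun g => ⟨fun t => mpB (g t), mpB_cont.comp g.continuous⟩
  let Q : C(unitInterval, X) → C(unitInterval, ℝ × X) :=
    fun g => ⟨fun t => mpF (g t), mpF_cont.comp g.continuous⟩
  have hPQ : ∀ φ, P (Q φ) = φ := fun φ => by ext t; exact mpB_mpF (φ t)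
  have hQA : ∀ φ : C(unitInterval, X), φ 0 = u₀ → φ 1 = e → Q φ ∈ A := by
    intro φ ha hb
    refine ⟨?_, ?_, fun t => mpF_mem _⟩
    · exact (mpB_mpF _).trans ha
    · exact (mpB_mpF _).trans hb
  let Ψ : A → ℝ := fun g => ⨆ s, J (P g.1 s)
  have hΨ : LowerSemicontinuous Ψ := by
    refine lowerSemicontinuous_ciSup (fun g => mp_bdd J hJc (P g.1)) fun s => ?_
    refine Continuous.lowerSemicontinuous ?_
    exact hJc.comp (mpB_cont.comp ((continuous_eval_const s).comp continuous_subtype_val))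
  obtain ⟨φ₀, ha, hb, hφ₀⟩ := hup
  obtain ⟨g, hg1, hg2⟩ := mp_ekeland Ψ hΨ c (fun g => hlow _ g.2.1 g.2.2.1) (ε / 8) (by positivity)
    ⟨Q φ₀, hQA φ₀ ha hb⟩
  have hgφ₀ : Ψ ⟨Q φ₀, hQA φ₀ ha hb⟩ = ⨆ s, J (φ₀ s) := by
    simp only [Ψ, hPQ]
  rw [hgφ₀] at hg1
  set φ := P g.1 with hφ
  set M := Ψ g with hMdef
  have hcM : c ≤ M := hlow _ g.2.1 g.2.2.1
  have hM : ∀ s, J (φ s) ≤ M := fun s => le_ciSup (mp_bdd J hJc φ) s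
  have hφ0 : φ 0 = u₀ := g.2.1
  have hφ1 : φ 1 = e := g.2.2.1
  by_contra hcon
  push Not at hcon
  obtain ⟨v, hv0, hv1, hvn, hvd⟩ := mp_field J hJ φ M ε hε (by rw [hφ0]; linarith)
    (by rw [hφ1]; linarith) (fun s hs => hcon _ (by linarith) (by linarith))
  have hloc := mp_local J hJ φ v M (ε / 2) hM hvd
  obtain ⟨r, hr, hball⟩ := Metric.eventually_nhds_iff.1 hloc
  obtain ⟨h, hpos, hhr, hh2⟩ : ∃ h : ℝ, 0 < h ∧ h < r ∧ h ≤ 1 / 2 :=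
    ⟨min (r / 2) (1 / 2), by positivity, lt_of_le_of_lt (min_le_left _ _) (by linarith),
      min_le_right _ _⟩
  have hdec := hball (by rw [Real.dist_eq, sub_zero, abs_of_pos hpos]; exact hhr : dist h 0 < r) hpos
  let ψ : C(unitInterval, X) := φ + h • v
  have hψA : Q ψ ∈ A := hQA ψ (by simp [ψ, hv0, hφ0]) (by simp [ψ, hv1, hφ1])
  have hψM : Ψ ⟨Q ψ, hψA⟩ ≤ M - h * (ε / 2) := by
    simp only [Ψ, hPQ]
    exact ciSup_le fun s => hdec s
  have hdist : dist g ⟨Q ψ, hψA⟩ ≤ 2 * h := by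
    rw [Subtype.dist_eq, ContinuousMap.dist_le (by positivity)]
    intro t
    have e1 : g.1 t = mpF (φ t) := (mpF_mpB _ (g.2.2.2 t)).symm
    rw [e1]
    refine mpF_dist (φ t) (ψ t) h hpos.le hh2 ?_
    simp only [ψ, ContinuousMap.add_apply, ContinuousMap.smul_apply, add_sub_cancel_left]
    rw [norm_smul, Real.norm_of_nonneg hpos.le]
    exact mul_le_mul_of_nonneg_left (hvn t) hpos.le
  have hfin := hg2 ⟨Q ψ, hψA⟩ (by nlinarith)
  nlinarith
end


/-- **Mountain Pass Theorem under the weak Cerami–Palais–Smale condition.**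
Let `X` and `S` be real Banach spaces, `ι : X → S` a continuous linear embedding,
and `J : X → ℝ` a `C¹` functional. Suppose there are `ρ > 0`, `α ∈ ℝ`, `u₀, e ∈ X`
with: (i) `J u ≥ α > J u₀` whenever `‖ι u - ι u₀‖ = ρ`; (ii) `‖ι e - ι u₀‖ > ρ` and
`J e < J u₀`. Let `c` be the mountain pass level (infimum over continuous paths from
`u₀` to `e` of the maximum of `J` along the path). If `J` satisfies the weak
Cerami–Palais–Smale condition at level `c`, then `J` has a critical point `u*`,
different from `u₀`, with `J u* = c ≥ α > J u₀`. -/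
theorem mountain_pass_wCPS
    {X S : Type*} [NormedAddCommGroup X] [NormedSpace ℝ X] [CompleteSpace X]
    [NormedAddCommGroup S] [NormedSpace ℝ S] [CompleteSpace S]
    (ι : X →L[ℝ] S) (hι : Function.Injective ι)
    (J : X → ℝ) (hJ : ContDiff ℝ 1 J)
    (ρ : ℝ) (hρ : 0 < ρ) (α : ℝ) (u₀ e : X)
    (hcirc : ∀ u : X, ‖ι u - ι u₀‖ = ρ → α ≤ J u)
    (hα : J u₀ < α)
    (he : ρ < ‖ι e - ι u₀‖) (hJe : J e < J u₀)
    (c : ℝ)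
    (hc : c = sInf {m : ℝ | ∃ φ : C(unitInterval, X),
        φ 0 = u₀ ∧ φ 1 = e ∧ m = ⨆ s : unitInterval, J (φ s)})
    (wCPS : ∀ u : ℕ → X,
      Filter.Tendsto (fun n => J (u n)) Filter.atTop (nhds c) →
      Filter.Tendsto (fun n => ‖fderiv ℝ J (u n)‖ * (1 + ‖u n‖)) Filter.atTop (nhds 0) →
      ∃ (v : X) (φ : ℕ → ℕ), StrictMono φ ∧
        Filter.Tendsto (fun n => ‖ι (u (φ n)) - ι v‖) Filter.atTop (nhds 0) ∧
        J v = c ∧ fderiv ℝ J v = 0) :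
    ∃ u' : X, u' ≠ u₀ ∧ J u' = c ∧ fderiv ℝ J u' = 0 ∧ α ≤ c := by
  have hJc : Continuous J := hJ.continuous
  set A := {m : ℝ | ∃ φ : C(unitInterval, X),
        φ 0 = u₀ ∧ φ 1 = e ∧ m = ⨆ s : unitInterval, J (φ s)} with hAdef
  have hAα : ∀ m ∈ A, α ≤ m := by
    rintro m ⟨φ, h0, h1, rfl⟩
    have hcont : Continuous (fun s => ‖ι (φ s) - ι u₀‖) := by fun_prop
    obtain ⟨s, hs⟩ := mem_range_of_exists_le_of_exists_ge hcont (c := ρ)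
      ⟨0, by simp [h0, hρ.le]⟩ ⟨1, by rw [h1]; exact he.le⟩
    exact (hcirc _ hs).trans (le_ciSup (mp_bdd J hJc φ) s)
  have hAne : A.Nonempty := by
    refine ⟨_, ⟨fun s => u₀ + (s : ℝ) • (e - u₀), by fun_prop⟩, ?_, ?_, rfl⟩ <;> simp
  have hAb : BddBelow A := ⟨α, hAα⟩
  have hαc : α ≤ c := by rw [hc]; exact le_csInf hAne hAα
  have key : ∀ n : ℕ, ∃ u, c ≤ J u ∧ J u < c + 1 / ((n : ℝ) + 1) ∧
      ‖fderiv ℝ J u‖ * (1 + ‖u‖) < 1 / ((n : ℝ) + 1) := by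
    intro n
    have hpos : (0 : ℝ) < 1 / ((n : ℝ) + 1) := by positivity
    refine mp_cerami J hJ u₀ e c (by linarith) (by linarith) ?_ _ hpos ?_
    · intro φ h0 h1
      rw [hc]
      exact csInf_le hAb ⟨φ, h0, h1, rfl⟩
    · obtain ⟨_, ⟨φ, h0, h1, rfl⟩, hlt⟩ := exists_lt_of_csInf_lt hAne
        (by rw [← hc]; linarith : sInf A < c + 1 / ((n : ℝ) + 1))
      exact ⟨φ, h0, h1, hlt⟩
  choose u hu1 hu2 hu3 using key
  have hlim := tendsto_one_div_add_atTop_nhds_zero_nat (𝕜 := ℝ)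
  obtain ⟨v, -, -, -, hv, hv'⟩ := wCPS u
    (tendsto_of_tendsto_of_tendsto_of_le_of_le tendsto_const_nhds
      (by simpa using hlim.const_add c) hu1 (fun n => (hu2 n).le))
    (tendsto_of_tendsto_of_tendsto_of_le_of_le tendsto_const_nhds hlim
      (fun n => by positivity) (fun n => (hu3 n).le))
  refine ⟨v, ?_, hv, hv', hαc⟩
  rintro rfl
  linarith
end

section
/- Growth estimate under dilations (Lemma 4.2): Assume (H2) there exists α₁ > 0 with A(t,ξ) ≥ α₁|ξ|^p for all (t,ξ) ∈ ℝ × ℝ^N; (H3) there exists η₁ > 0 with A(t,ξ) ≤ η₁ a(t,ξ)·ξ for all (t,ξ); and (H7) there exist constants s > 0 and α₃ > 0 with s·A(t,ξ) − a(t,ξ)·ξ − A_t(t,ξ)·t ≥ α₃ a(t,ξ)·ξ for all (t,ξ). Then for every (t,ξ) ∈ ℝ × ℝ^N and every σ ≥ 1 one has A(σt, σξ) ≤ σ^{s − α₃/η₁} A(t,ξ). -/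
open Real RealInnerProductSpace

/-- **Growth estimate under dilations (Lemma 4.2).**
Let `A : ℝ × ℝ^N → ℝ` be `C¹` with partial derivatives `A_t = ∂A/∂t` and
`a = ∇_ξ A`. Assume (H2) `A(t,ξ) ≥ α₁|ξ|^p`, (H3) `A(t,ξ) ≤ η₁ a(t,ξ)·ξ`, and
(H7) `s·A(t,ξ) − a(t,ξ)·ξ − A_t(t,ξ)·t ≥ α₃ a(t,ξ)·ξ` for all `(t,ξ)`.
Then `A(σt, σξ) ≤ σ^(s − α₃/η₁) A(t,ξ)` for all `(t,ξ)` and all `σ ≥ 1`. -/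
theorem growth_estimate_under_dilations
    {N : ℕ} (hN : 1 ≤ N) (p : ℝ) (hp : 1 < p)
    (A At : ℝ → EuclideanSpace ℝ (Fin N) → ℝ)
    (a : ℝ → EuclideanSpace ℝ (Fin N) → EuclideanSpace ℝ (Fin N))
    (hA : ContDiff ℝ 1 (fun q : ℝ × EuclideanSpace ℝ (Fin N) => A q.1 q.2))
    (hAt : ∀ (t : ℝ) (ξ : EuclideanSpace ℝ (Fin N)),
      HasDerivAt (fun r : ℝ => A r ξ) (At t ξ) t)
    (ha : ∀ (t : ℝ) (ξ : EuclideanSpace ℝ (Fin N)),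
      HasGradientAt (fun η => A t η) (a t ξ) ξ)
    (α₁ : ℝ) (hα₁ : 0 < α₁)
    (hH2 : ∀ (t : ℝ) (ξ : EuclideanSpace ℝ (Fin N)), α₁ * ‖ξ‖ ^ p ≤ A t ξ)
    (η₁ : ℝ) (hη₁ : 0 < η₁)
    (hH3 : ∀ (t : ℝ) (ξ : EuclideanSpace ℝ (Fin N)), A t ξ ≤ η₁ * ⟪a t ξ, ξ⟫)
    (s α₃ : ℝ) (hs : 0 < s) (hα₃ : 0 < α₃)
    (hH7 : ∀ (t : ℝ) (ξ : EuclideanSpace ℝ (Fin N)),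
      α₃ * ⟪a t ξ, ξ⟫ ≤ s * A t ξ - ⟪a t ξ, ξ⟫ - At t ξ * t) :
    ∀ (t : ℝ) (ξ : EuclideanSpace ℝ (Fin N)) (σ : ℝ), 1 ≤ σ →
      A (σ * t) (σ • ξ) ≤ σ ^ (s - α₃ / η₁) * A t ξ := by
  intro t ξ σ hσ
  set c := s - α₃ / η₁ with hc
  have key : ∀ r : ℝ, HasDerivAt (fun r : ℝ => A (r * t) (r • ξ))
      (At (r * t) (r • ξ) * t + ⟪a (r * t) (r • ξ), ξ⟫) r := by
    intro r
    have hF := (hA.differentiable one_ne_zero (r * t, r • ξ)).hasFDerivAt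
    set F := fderiv ℝ (fun q : ℝ × EuclideanSpace ℝ (Fin N) => A q.1 q.2) (r * t, r • ξ)
    have h1 : F (t, 0) = At (r * t) (r • ξ) * t := by
      have e1 := HasFDerivAt.comp (r * t) (f := fun x : ℝ => (x, r • ξ)) hF
        (hasFDerivAt_prodMk_left (r * t) (r • ξ))
      have e2 := e1.unique (hAt (r * t) (r • ξ)).hasFDerivAt
      have e3 := congrArg (fun L => L t) e2
      simpa [mul_comm] using e3
    have h2 : F (0, ξ) = ⟪a (r * t) (r • ξ), ξ⟫ := by
      have e1 := HasFDerivAt.comp (r • ξ) (f := fun x => (r * t, x)) hF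
        (hasFDerivAt_prodMk_right (r * t) (r • ξ))
      have e2 := e1.unique (ha (r * t) (r • ξ)).hasFDerivAt
      have e3 := congrArg (fun L => L ξ) e2
      simpa using e3
    have h3 : HasDerivAt (fun r : ℝ => (r * t, r • ξ)) (t, ξ) r := by
      have u := (hasDerivAt_id r).mul_const t
      have v := (hasDerivAt_id r).smul_const ξ
      simpa using u.prodMk v
    have h4 := HasFDerivAt.comp_hasDerivAt r (f := fun r : ℝ => (r * t, r • ξ)) hF h3
    have h5 : F (t, ξ) = At (r * t) (r • ξ) * t + ⟪a (r * t) (r • ξ), ξ⟫ := by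
      rw [← h1, ← h2, ← map_add]; simp
    rw [← h5]
    exact h4
  have hg : ∀ r : ℝ, 1 ≤ r → HasDerivAt (fun r : ℝ => r ^ (-c) * A (r * t) (r • ξ))
      ((-c) * r ^ (-c - 1) * A (r * t) (r • ξ)
        + r ^ (-c) * (At (r * t) (r • ξ) * t + ⟪a (r * t) (r • ξ), ξ⟫)) r := by
    intro r hr
    exact (Real.hasDerivAt_rpow_const (Or.inl (by linarith))).mul (key r)
  have hanti : AntitoneOn (fun r : ℝ => r ^ (-c) * A (r * t) (r • ξ)) (Set.Ici 1) := by
    apply antitoneOn_of_deriv_nonpos (convex_Ici 1)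
    · intro r hr
      exact (hg r hr).continuousAt.continuousWithinAt
    · intro r hr
      rw [interior_Ici] at hr
      exact (hg r (le_of_lt hr)).differentiableAt.differentiableWithinAt
    · intro r hr
      rw [interior_Ici] at hr
      have hr1 : (1 : ℝ) < r := hr
      have hr0 : 0 < r := by linarith
      rw [(hg r hr1.le).deriv]
      have e : r ^ (-c) = r ^ (-c - 1) * r := by
        rw [← Real.rpow_add_one hr0.ne']; ring_nf
      have h7 := hH7 (r * t) (r • ξ)
      have h3 := hH3 (r * t) (r • ξ)
      rw [real_inner_smul_right] at h7 h3
      have h8 : α₃ / η₁ * A (r * t) (r • ξ) ≤ α₃ * (r * ⟪a (r * t) (r • ξ), ξ⟫) := by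
        calc _ ≤ α₃ / η₁ * (η₁ * (r * ⟪a (r * t) (r • ξ), ξ⟫)) := by gcongr
          _ = _ := by field_simp
      have h9 : r * (At (r * t) (r • ξ) * t + ⟪a (r * t) (r • ξ), ξ⟫)
          - c * A (r * t) (r • ξ) ≤ 0 := by
        rw [hc]; linarith
      have h10 := mul_nonpos_of_nonneg_of_nonpos (Real.rpow_nonneg hr0.le (-c - 1)) h9
      rw [e]
      linarith
  have hfin := hanti (Set.mem_Ici.2 le_rfl) (Set.mem_Ici.2 hσ) hσ
  simp only [Real.one_rpow, one_mul, one_smul] at hfin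
  have hσ0 : 0 < σ := by linarith
  calc A (σ * t) (σ • ξ) = σ ^ c * (σ ^ (-c) * A (σ * t) (σ • ξ)) := by
        rw [← mul_assoc, ← Real.rpow_add hσ0]; simp
    _ ≤ σ ^ c * A t ξ := by gcongr
end

section
/- Sign structure of the truncation profile h for small λ (Section 3): Let 1 < q < p < s be real exponents and α₁ > 0, c_q > 0, c_s > 0 constants, and for λ > 0 set h_λ(x) = α₁ x^p − (λ/q) c_q^q x^q − (1/s) c_s^s x^s for x ≥ 0. Then there exists λ₁ > 0 such that for every λ ∈ (0, λ₁) there are real numbers 0 < R₀ < R₁ with h_λ(R₀) = h_λ(R₁) = 0, h_λ(x) > 0 for all x ∈ (R₀, R₁), and h_λ(x) ≤ 0 for all x ∈ [0, R₀] ∪ [R₁, +∞). -/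
open Real

/-- The truncation profile `h_λ(x) = α₁ x^p − (λ/q) c_q^q x^q − (1/s) c_s^s x^s`. -/
noncomputable def truncProfile (α₁ cq cs q p s lam x : ℝ) : ℝ :=
  α₁ * x ^ p - lam / q * cq ^ q * x ^ q - 1 / s * cs ^ s * x ^ s

lemma concave_sign (f : ℝ → ℝ) (hc : ConcaveOn ℝ Set.univ f) (hf : Continuous f)
    (a m b : ℝ) (ham : a < m) (hmb : m < b) (ha : f a < 0) (hm : 0 < f m) (hb : f b < 0) :
    ∃ t₀ t₁ : ℝ, t₀ < t₁ ∧ f t₀ = 0 ∧ f t₁ = 0 ∧ (∀ t, t₀ < t → t < t₁ → 0 < f t) ∧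
      (∀ t, t ≤ t₀ → f t ≤ 0) ∧ (∀ t, t₁ ≤ t → f t ≤ 0) := by
  -- a point strictly between `x` (nonnegative value) and `m` has positive value
  have key : ∀ x y, 0 ≤ f x → ((x < y ∧ y < m) ∨ (m < y ∧ y < x)) → 0 < f y := by
    intro x y hx hxy
    have hne : m - x ≠ 0 := by
      intro h
      rcases hxy with h1 | h1 <;> linarith
    have h1 : 0 < (y - x) / (m - x) := by
      rcases hxy with h1 | h1
      · exact div_pos (by linarith) (by linarith)
      · exact div_pos_of_neg_of_neg (by linarith) (by linarith)
    have h2 : 0 < (m - y) / (m - x) := by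
      rcases hxy with h1 | h1
      · exact div_pos (by linarith) (by linarith)
      · exact div_pos_of_neg_of_neg (by linarith) (by linarith)
    have h3 : (m - y) / (m - x) + (y - x) / (m - x) = 1 := by
      field_simp
      ring
    have h4 := hc.2 (Set.mem_univ x) (Set.mem_univ m) h2.le h1.le h3
    have h5 : ((m - y) / (m - x)) • x + ((y - x) / (m - x)) • m = y := by
      simp only [smul_eq_mul]
      field_simp
      ring
    rw [h5] at h4
    simp only [smul_eq_mul] at h4
    have := mul_pos h1 hm
    have := mul_nonneg h2.le hx
    linarith
  obtain ⟨t₀, ⟨h0a, h0m⟩, h0⟩ :=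
    intermediate_value_Icc ham.le hf.continuousOn ⟨ha.le, hm.le⟩
  obtain ⟨t₁, ⟨h1m, h1b⟩, h1⟩ :=
    intermediate_value_Icc' hmb.le hf.continuousOn ⟨hb.le, hm.le⟩
  have h0m' : t₀ < m := lt_of_le_of_ne h0m (by rintro rfl; linarith)
  have h1m' : m < t₁ := lt_of_le_of_ne h1m (by rintro rfl; linarith)
  refine ⟨t₀, t₁, by linarith, h0, h1, ?_, ?_, ?_⟩
  · intro t ht0 ht1
    rcases lt_trichotomy t m with h | h | h
    · exact key t₀ t h0.ge (Or.inl ⟨ht0, h⟩)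
    · rw [h]; exact hm
    · exact key t₁ t h1.ge (Or.inr ⟨h, ht1⟩)
  · intro t ht
    by_contra! hpos
    have hlt : t < t₀ := lt_of_le_of_ne ht (by rintro rfl; linarith)
    have := key t t₀ hpos.le (Or.inl ⟨hlt, h0m'⟩)
    linarith
  · intro t ht
    by_contra! hpos
    have hlt : t₁ < t := lt_of_le_of_ne ht (by rintro rfl; linarith)
    have := key t t₁ hpos.le (Or.inr ⟨h1m', hlt⟩)
    linarith

lemma exp_solve (K c y : ℝ) (hK : 0 < K) (hc : c ≠ 0) (hy : 0 < y) :
    ∃ t, K * exp (c * t) = y := by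
  refine ⟨log (y / K) / c, ?_⟩
  rw [mul_div_cancel₀ _ hc, exp_log (by positivity)]
  field_simp

lemma convex_exp_mul (K c : ℝ) (hK : 0 ≤ K) :
    ConvexOn ℝ Set.univ (fun t : ℝ => K * exp (c * t)) := by
  have h : ConvexOn ℝ Set.univ (fun t : ℝ => exp (c * t)) := by
    have := convexOn_exp.comp_linearMap (LinearMap.mulLeft ℝ c)
    simpa [Function.comp_def] using this
  simpa using h.smul hK

/-- **Sign structure of the truncation profile `h_λ` for small `λ` (Section 3).**
Let `1 < q < p < s` and `α₁, c_q, c_s > 0`. Then there exists `λ₁ > 0` such that for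
every `λ ∈ (0, λ₁)` there are `0 < R₀ < R₁` with `h_λ(R₀) = h_λ(R₁) = 0`,
`h_λ(x) > 0` for `x ∈ (R₀, R₁)`, and `h_λ(x) ≤ 0` for `x ∈ [0, R₀] ∪ [R₁, +∞)`. -/
theorem truncProfile_sign_structure
    (p q s α₁ cq cs : ℝ)
    (hq : 1 < q) (hqp : q < p) (hps : p < s)
    (hα₁ : 0 < α₁) (hcq : 0 < cq) (hcs : 0 < cs) :
    ∃ lam₁ > (0 : ℝ), ∀ lam : ℝ, 0 < lam → lam < lam₁ →
      ∃ R₀ R₁ : ℝ, 0 < R₀ ∧ R₀ < R₁ ∧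
        truncProfile α₁ cq cs q p s lam R₀ = 0 ∧
        truncProfile α₁ cq cs q p s lam R₁ = 0 ∧
        (∀ x : ℝ, R₀ < x → x < R₁ → 0 < truncProfile α₁ cq cs q p s lam x) ∧
        (∀ x : ℝ, 0 ≤ x → x ≤ R₀ → truncProfile α₁ cq cs q p s lam x ≤ 0) ∧
        (∀ x : ℝ, R₁ ≤ x → truncProfile α₁ cq cs q p s lam x ≤ 0) := by
  have hs : 0 < s := by linarith
  have hq0 : 0 < q := by linarith
  obtain ⟨B, hBdef⟩ : ∃ B, B = 1 / s * cs ^ s := ⟨_, rfl⟩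
  obtain ⟨C, hCdef⟩ : ∃ C, C = cq ^ q / q := ⟨_, rfl⟩
  have hB : 0 < B := by rw [hBdef]; positivity
  have hC : 0 < C := by rw [hCdef]; positivity
  obtain ⟨m, hm⟩ := exp_solve B (s - p) (α₁ / 2) hB (by intro h; linarith) (by positivity)
  refine ⟨α₁ / 2 / (C * exp ((q - p) * m)), by positivity, ?_⟩
  intro lam hlam hlam1
  have hA : 0 < lam * C := by positivity
  rw [lt_div_iff₀ (by positivity), ← mul_assoc] at hlam1
  obtain ⟨a, ha⟩ := exp_solve (lam * C) (q - p) (2 * α₁) hA (by intro h; linarith) (by positivity)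
  obtain ⟨b, hb⟩ := exp_solve B (s - p) (2 * α₁) hB (by intro h; linarith) (by positivity)
  have ham : a < m := by
    have h : exp ((q - p) * m) < exp ((q - p) * a) :=
      lt_of_mul_lt_mul_left (by linarith) hA.le
    rw [exp_lt_exp] at h
    nlinarith
  have hmb : m < b := by
    have h : exp ((s - p) * m) < exp ((s - p) * b) :=
      lt_of_mul_lt_mul_left (by linarith) hB.le
    rw [exp_lt_exp] at h
    nlinarith
  have hconc : ConcaveOn ℝ Set.univ
      (fun t : ℝ => α₁ - (lam * C * exp ((q - p) * t) + B * exp ((s - p) * t))) :=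
    (concaveOn_const α₁ convex_univ).sub
      ((convex_exp_mul (lam * C) (q - p) hA.le).add (convex_exp_mul B (s - p) hB.le))
  have p1 := mul_pos hA (exp_pos ((q - p) * b))
  have p2 := mul_pos hB (exp_pos ((s - p) * a))
  obtain ⟨t₀, t₁, h01, h0, h1, hpos, hl, hr⟩ := concave_sign _ hconc (by fun_prop) a m b ham hmb
    (by linarith) (by linarith) (by linarith)
  have hform : ∀ t, truncProfile α₁ cq cs q p s lam (exp t) = exp (p * t) *
      (α₁ - (lam * C * exp ((q - p) * t) + B * exp ((s - p) * t))) := by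
    intro t
    have e1 : exp (q * t) = exp (p * t) * exp ((q - p) * t) := by
      rw [← exp_add]; ring_nf
    have e2 : exp (s * t) = exp (p * t) * exp ((s - p) * t) := by
      rw [← exp_add]; ring_nf
    unfold truncProfile
    rw [← exp_mul, ← exp_mul, ← exp_mul, mul_comm t p, mul_comm t q, mul_comm t s, e1, e2,
      hBdef, hCdef]
    ring
  refine ⟨exp t₀, exp t₁, exp_pos _, exp_lt_exp.2 h01, ?_, ?_, ?_, ?_, ?_⟩
  · rw [hform, h0, mul_zero]
  · rw [hform, h1, mul_zero]
  · intro x hx0 hx1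
    have hx : 0 < x := (exp_pos _).trans hx0
    rw [← exp_log hx] at hx0 hx1 ⊢
    rw [exp_lt_exp] at hx0 hx1
    rw [hform]
    exact mul_pos (exp_pos _) (hpos _ hx0 hx1)
  · intro x hx hx0
    rcases hx.eq_or_lt with rfl | hx
    · unfold truncProfile
      rw [zero_rpow (by linarith), zero_rpow (by linarith), zero_rpow (by linarith)]
      simp
    · rw [← exp_log hx] at hx0 ⊢
      rw [exp_le_exp] at hx0
      rw [hform]
      exact mul_nonpos_of_nonneg_of_nonpos (exp_pos _).le (hl _ hx0)
  · intro x hx1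
    have hx : 0 < x := (exp_pos _).trans_le hx1
    rw [← exp_log hx] at hx1 ⊢
    rw [exp_le_exp] at hx1
    rw [hform]
    exact mul_nonpos_of_nonneg_of_nonpos (exp_pos _).le (hr _ hx1)
end
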